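/- Let A be a non-zero skew left brace that has a factorization A = B + C through left ideals B and C, where both B and C are trivial as skew left braces. If B is a strong left ideal of A, then B or C contains a non-zero ideal I of A that acts trivially on A, i.e., λ_i = id_A for all i ∈ I. -/

import Mathlib

/-- A skew left brace: `(A,+)` and `(A,∘)` are groups (sharing the same identity `0`)
such that `a ∘ (b + c) = a ∘ b - a + a ∘ c`.  Here `circ` is the operation `∘` and
`cinv a` is the inverse of `a` in `(A,∘)`. -/
class SkewBrace (A : Type*) extends AddGroup A where
  circ : A → A → A
  cinv : A → A
  circ_assoc : ∀ a b c : A, circ (circ a b) c = circ a (circ b c)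
  zero_circ : ∀ a : A, circ 0 a = a
  circ_zero : ∀ a : A, circ a 0 = a
  cinv_circ : ∀ a : A, circ (cinv a) a = 0
  circ_cinv : ∀ a : A, circ a (cinv a) = 0
  compat : ∀ a b c : A, circ a (b + c) = circ a b + -a + circ a c

open SkewBrace

/-- `lam a b = -a + a ∘ b`. -/
def lam {A : Type*} [SkewBrace A] (a b : A) : A := -a + circ a b

/-- The star operation `a * b = lam a b - b = -a + a ∘ b - b`. -/
def bstar {A : Type*} [SkewBrace A] (a b : A) : A := lam a b - b

/-- `X * Y`: the subgroup of `(A,+)` generated by `{x * y : x ∈ X, y ∈ Y}`. -/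
def starSpan {A : Type*} [SkewBrace A] (X Y : Set A) : AddSubgroup A :=
  AddSubgroup.closure {z | ∃ x ∈ X, ∃ y ∈ Y, z = bstar x y}

/-- The right series of `st`: `rseriesOf st 0 = A = A^(1)` and
`rseriesOf st n = A^(n+1)`, so that `A^(n+1) = A^(n) * A`. -/
def rseriesOf {G : Type*} [AddGroup G] (st : G → G → G) : ℕ → AddSubgroup G
  | 0 => ⊤
  | n + 1 => AddSubgroup.closure {z | ∃ u ∈ rseriesOf st n, ∃ a : G, z = st u a}

section helpers
variable {A : Type*} [SkewBrace A]

lemma circ_eq (a b : A) : circ a b = a + lam a b := by simp [lam]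

lemma lam_add (a x y : A) : lam a (x + y) = lam a x + lam a y := by
  simp [lam, compat, add_assoc]

lemma lam_zero_left (x : A) : lam 0 x = x := by simp [lam, zero_circ]

lemma lam_zero (a : A) : lam a 0 = 0 := by simp [lam, circ_zero]

lemma lam_neg (a x : A) : lam a (-x) = -lam a x := by
  rw [eq_neg_iff_add_eq_zero, ← lam_add]; simp [lam_zero]

lemma lam_circ (a b x : A) : lam (circ a b) x = lam a (lam b x) := by
  have h : lam a (lam b x) = -lam a b + lam a (circ b x) := by
    rw [← lam_neg, ← lam_add]; rfl
  rw [h]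
  simp [lam, circ_assoc, add_assoc]

lemma lam_cinv (a x : A) : lam a (lam (cinv a) x) = x := by
  rw [← lam_circ, circ_cinv, lam_zero_left]

lemma conj_mem (I : AddSubgroup A) (h1 : ∀ a : A, ∀ x ∈ I, lam a x ∈ I) (h2 : I.Normal)
    (h3 : ∀ i ∈ I, ∀ x : A, lam i x = x) (a x : A) (hx : x ∈ I) :
    circ (circ a x) (cinv a) ∈ I := by
  have : circ (circ a x) (cinv a) = a + lam a x + -a := by
    rw [circ_assoc, circ_eq x, h3 x hx, compat, circ_cinv, circ_eq, add_zero]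
  rw [this]
  exact h2.conj_mem _ (h1 a x hx) a

end helpers

/-- if a non-zero skew brace `A = B + C` factorizes through left ideals
trivial as skew braces and `B` is a strong left ideal, then `B` or `C` contains a
non-zero ideal `I` of `A` acting trivially on `A` (`lam i = id` for all `i ∈ I`). -/
theorem stmt11 {A : Type*} [SkewBrace A] [Nontrivial A] (B C : AddSubgroup A)
    (hB : ∀ a : A, ∀ x ∈ B, lam a x ∈ B)
    (hC : ∀ a : A, ∀ x ∈ C, lam a x ∈ C)
    (hBn : B.Normal)
    (hBtriv : ∀ x ∈ B, ∀ y ∈ B, x + y = circ x y)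
    (hCtriv : ∀ x ∈ C, ∀ y ∈ C, x + y = circ x y)
    (hfact : ∀ a : A, ∃ b ∈ B, ∃ c ∈ C, a = b + c) :
    ∃ I : AddSubgroup A,
      (∀ a : A, ∀ x ∈ I, lam a x ∈ I) ∧
      I.Normal ∧
      (∀ a : A, ∀ x ∈ I, circ (circ a x) (cinv a) ∈ I) ∧
      I ≠ ⊥ ∧
      (∀ i ∈ I, ∀ x : A, lam i x = x) ∧
      ((I : Set A) ⊆ (B : Set A) ∨ (I : Set A) ⊆ (C : Set A)) := by
  have hBl : ∀ b ∈ B, ∀ x ∈ B, lam b x = x := by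
    intro b hb x hx
    simp [lam, ← hBtriv b hb x hx]
  have hCl : ∀ b ∈ C, ∀ x ∈ C, lam b x = x := by
    intro b hb x hx
    simp [lam, ← hCtriv b hb x hx]
  have hCadd : ∀ c ∈ C, ∀ d ∈ C, ∀ x, lam (c + d) x = lam c (lam d x) := by
    intro c hc d hd x
    rw [hCtriv c hc d hd, lam_circ]
  have hCn : ∀ c ∈ C, ∀ x, lam c (lam (-c) x) = x := by
    intro c hc x
    rw [← hCadd c hc _ (C.neg_mem hc), add_neg_cancel, lam_zero_left]
  have hCn' : ∀ c ∈ C, ∀ x, lam (-c) (lam c x) = x := by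
    intro c hc x
    rw [← hCadd _ (C.neg_mem hc) c hc, neg_add_cancel, lam_zero_left]
  have hconj : ∀ a : A, ∀ b ∈ B, -a + b + a ∈ B := by
    intro a b hb
    simpa using hBn.conj_mem b hb (-a)
  have key : ∀ b ∈ B, ∀ c ∈ C, ∀ x ∈ B, lam (lam b c) x = lam c x := by
    intro b hb c hc x hx
    have h1 : circ b c = circ (lam b c) (lam (cinv (lam b c)) (-lam b c + b + lam b c)) := by
      rw [circ_eq (lam b c), lam_cinv, circ_eq]; simp [add_assoc]
    have h2 := congrArg (fun t => lam t x) h1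
    simp only [lam_circ] at h2
    rw [hBl b hb _ (hB c x hx), hBl _ (hB _ _ (hconj _ _ hb)) x hx] at h2
    exact h2.symm
  have hext : ∀ c ∈ C, (∀ x ∈ B, lam c x = x) → ∀ x, lam c x = x := by
    intro c hc h x
    obtain ⟨b, hb, d, hd, rfl⟩ := hfact x
    rw [lam_add, h b hb, hCl c hc d hd]
  let I : AddSubgroup A :=
    { carrier := {c | c ∈ C ∧ (∀ x, lam c x = x) ∧ ∀ b ∈ B, c + b = b + c}
      zero_mem' := ⟨C.zero_mem, lam_zero_left, by simp⟩
      add_mem' := by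
        rintro c d ⟨hc, hc1, hc2⟩ ⟨hd, hd1, hd2⟩
        refine ⟨C.add_mem hc hd, fun x => ?_, fun b hb => ?_⟩
        · rw [hCadd c hc d hd, hd1, hc1]
        · rw [add_assoc, hd2 b hb, ← add_assoc, hc2 b hb, add_assoc]
      neg_mem' := by
        rintro c ⟨hc, hc1, hc2⟩
        refine ⟨C.neg_mem hc, fun x => ?_, fun b hb => ?_⟩
        · have := hCn' c hc x
          rwa [hc1] at this
        · have := hc2 b hb
          rw [neg_add_eq_iff_eq_add, ← add_assoc, this, add_neg_cancel_right] }
  have memI : ∀ c, c ∈ I ↔ (c ∈ C ∧ (∀ x, lam c x = x) ∧ ∀ b ∈ B, c + b = b + c) :=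
    fun c => Iff.rfl
  by_cases hI : I = ⊥
  · have htriv : ∀ b ∈ B, ∀ x, lam b x = x := by
      intro b hb x
      obtain ⟨b1, hb1, c, hc, rfl⟩ := hfact x
      rw [lam_add, hBl b hb b1 hb1]
      have hm : lam b c + -c ∈ I := by
        refine ⟨C.add_mem (hC b c hc) (C.neg_mem hc), ?_, ?_⟩
        · refine hext _ (C.add_mem (hC b c hc) (C.neg_mem hc)) fun x hx => ?_
          rw [hCadd _ (hC b c hc) _ (C.neg_mem hc), key b hb c hc _ (hB _ _ hx), hCn c hc]
        · intro b2 hb2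
          have h1 : lam b (c + (-c + b2 + c)) = b2 + lam b c := by
            rw [← hBl b hb b2 hb2, ← lam_add, hBl b hb b2 hb2]; simp [add_assoc]
          rw [lam_add, hBl b hb _ (hconj c b2 hb2)] at h1
          rw [← add_assoc b2, ← h1]; simp [add_assoc]
      rw [hI, AddSubgroup.mem_bot, add_neg_eq_zero] at hm
      rw [hm]
    refine ⟨B, hB, hBn, conj_mem B hB hBn htriv, ?_, htriv, Or.inl subset_rfl⟩
    rintro rfl
    obtain ⟨x, hx⟩ := exists_ne (0 : A)
    apply hx
    rw [← AddSubgroup.mem_bot, ← hI]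
    obtain ⟨b, hb, c, hc, rfl⟩ := hfact x
    rw [AddSubgroup.mem_bot] at hb
    subst hb
    rw [zero_add]
    refine ⟨hc, hext c hc ?_, ?_⟩
    · intro x hx
      rw [AddSubgroup.mem_bot] at hx
      rw [hx, lam_zero]
    · intro x hx
      rw [AddSubgroup.mem_bot] at hx
      simp [hx]
  · have h1 : ∀ a : A, ∀ x ∈ I, lam a x ∈ I := by
      rintro a i ⟨hi, hi1, hi2⟩
      obtain ⟨b, hb, c, hc, rfl⟩ := hfact a
      have e : lam (b + c) i = lam b i := by
        have : b + c = circ b (lam (cinv b) c) := by rw [circ_eq, lam_cinv]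
        rw [this, lam_circ, hCl _ (hC _ _ hc) i hi]
      rw [e]
      refine ⟨hC b i hi, hext _ (hC b i hi) fun x hx => ?_, fun b1 hb1 => ?_⟩
      · rw [key b hb i hi x hx, hi1]
      · have := congrArg (lam b) (hi2 b1 hb1)
        rwa [lam_add, lam_add, hBl b hb b1 hb1] at this
    have h2 : I.Normal := by
      constructor
      rintro i ⟨hi, hi1, hi2⟩ a
      obtain ⟨b, hb, c, hc, rfl⟩ := hfact a
      have hm : c + i + -c ∈ I := by
        refine ⟨C.add_mem (C.add_mem hc hi) (C.neg_mem hc), fun x => ?_, fun b1 hb1 => ?_⟩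
        · rw [hCadd _ (C.add_mem hc hi) _ (C.neg_mem hc), hCadd c hc i hi, hi1, hCn c hc]
        · have := hi2 _ (hconj c b1 hb1)
          calc c + i + -c + b1 = c + (i + (-c + b1 + c)) + -c := by simp [add_assoc]
            _ = b1 + (c + i + -c) := by rw [this]; simp [add_assoc]
      have e : b + c + i + -(b + c) = c + i + -c := by
        calc b + c + i + -(b + c) = (b + (c + i + -c)) + -b := by simp [add_assoc]
          _ = c + i + -c := by rw [← hm.2.2 b hb]; simp [add_assoc]
      rw [e]; exact hm
    have h3 : ∀ i ∈ I, ∀ x : A, lam i x = x := fun i hi => hi.2.1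
    exact ⟨I, h1, h2, conj_mem I h1 h2 h3, hI, h3, Or.inr fun i hi => hi.1⟩
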